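/- Leading drift-error term of the leapfrog (paper eq. 18): for i ≠ j and any phase-space point (x,p) with r_ij ≠ 0, the nested canonical Poisson bracket satisfies {{V_ij, T}, T}(x,p) = (G (m i)(m j) / r_ij⁵) · ( ‖v_ij‖² r_ij² − 3 (v_ij · x_ij)² ). -/

import Mathlib

open scoped RealInnerProductSpace BigOperators

noncomputable section

/-- Three-dimensional Euclidean space. -/
abbrev E3 : Type := EuclideanSpace ℝ (Fin 3)

/-- Phase space for `N` particles: positions and momenta. -/
abbrev Phase (N : ℕ) : Type := (Fin N → E3) × (Fin N → E3)

/-- Gradient of a phase-space function with respect to the `k`-th position. -/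
def gradPos {N : ℕ} (A : Phase N → ℝ) (k : Fin N) (w : Phase N) : E3 :=
  gradient (fun y => A (Function.update w.1 k y, w.2)) (w.1 k)

/-- Gradient of a phase-space function with respect to the `k`-th momentum. -/
def gradMom {N : ℕ} (A : Phase N → ℝ) (k : Fin N) (w : Phase N) : E3 :=
  gradient (fun y => A (w.1, Function.update w.2 k y)) (w.2 k)

/-- Canonical Poisson bracket of two phase-space functions. -/
def poisson {N : ℕ} (A B : Phase N → ℝ) (w : Phase N) : ℝ :=
  ∑ k, (⟪gradPos A k w, gradMom B k w⟫ - ⟪gradMom A k w, gradPos B k w⟫)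

/-- Kinetic energy `T = Σ_i ‖p_i‖²/(2 m_i)`. -/
def kinetic {N : ℕ} (m : Fin N → ℝ) (w : Phase N) : ℝ :=
  ∑ i, ‖w.2 i‖ ^ 2 / (2 * m i)

/-- Pair potential `V_ij = −G m_i m_j / ‖x_i − x_j‖`. -/
def pairPot {N : ℕ} (G : ℝ) (m : Fin N → ℝ) (i j : Fin N) (w : Phase N) : ℝ :=
  -(G * m i * m j) / ‖w.1 i - w.1 j‖

/-!
Since `T` depends on the momenta only, `{A, T}` is the derivative of `A` along the free motion
`x k ↦ x k + t • p k / m k`, which leaves `p` constant and is therefore a straight line in phase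
space. Bracketing `n` times with `T` is thus the `n`-th time derivative along this line, and for the
pair potential it remains to differentiate `t ↦ ‖x_ij + t • v_ij‖⁻¹` twice.
-/

lemma hasDerivAt_add_smul {𝕜 E : Type*} [NontriviallyNormedField 𝕜] [NormedAddCommGroup E]
    [NormedSpace 𝕜 E] (x v : E) (t : 𝕜) :
    HasDerivAt (fun s : 𝕜 => x + s • v) v t := by
  simpa using ((hasDerivAt_id t).smul_const v).const_add x

section InnerProductSpace

variable {F : Type*} [NormedAddCommGroup F] [InnerProductSpace ℝ F]

lemma hasDerivAt_norm_comp {f : ℝ → F} {f' : F} {t : ℝ} (hf : HasDerivAt f f' t) (h0 : f t ≠ 0) :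
    HasDerivAt (fun s => ‖f s‖) (⟪f', f t⟫ / ‖f t‖) t := by
  have hsqrt := hf.norm_sq.sqrt (pow_ne_zero 2 (norm_ne_zero_iff.2 h0))
  simp only [Real.sqrt_sq (norm_nonneg _)] at hsqrt
  rwa [mul_div_mul_left _ _ two_ne_zero, real_inner_comm] at hsqrt

lemma hasDerivAt_inv_norm_comp {f : ℝ → F} {f' : F} {t : ℝ} (hf : HasDerivAt f f' t)
    (h0 : f t ≠ 0) :
    HasDerivAt (fun s => ‖f s‖⁻¹) (-(⟪f', f t⟫ / ‖f t‖ ^ 3)) t := by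
  have hn : ‖f t‖ ≠ 0 := norm_ne_zero_iff.2 h0
  refine ((hasDerivAt_norm_comp hf h0).fun_inv hn).congr_deriv ?_
  field_simp

lemma iteratedDeriv_two_inv_norm_line {x : F} (hx : x ≠ 0) (v : F) :
    iteratedDeriv 2 (fun t : ℝ => ‖x + t • v‖⁻¹) 0 =
      (3 * ⟪v, x⟫ ^ 2 - ‖v‖ ^ 2 * ‖x‖ ^ 2) / ‖x‖ ^ 5 := by
  have hn : ‖x‖ ≠ 0 := norm_ne_zero_iff.2 hx
  have hline (t : ℝ) := hasDerivAt_add_smul x v t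
  have hne : ∀ᶠ t : ℝ in nhds 0, x + t • v ≠ 0 :=
    (hline 0).continuousAt.eventually_ne (by simpa using hx)
  have hfirst : deriv (fun t : ℝ => ‖x + t • v‖⁻¹) =ᶠ[nhds 0]
      fun t => -(⟪v, x + t • v⟫ / ‖x + t • v‖ ^ 3) := by
    filter_upwards [hne] with t ht
    exact (hasDerivAt_inv_norm_comp (hline t) ht).deriv
  have hinner : HasDerivAt (fun t : ℝ => ⟪v, x + t • v⟫) (‖v‖ ^ 2) 0 := by
    simpa using (hasDerivAt_const (0 : ℝ) v).inner ℝ (hline 0)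
  have hcube : HasDerivAt (fun t : ℝ => ‖x + t • v‖ ^ 3) (3 * ‖x‖ * ⟪v, x⟫) 0 := by
    refine ((hasDerivAt_norm_comp (hline 0) (by simpa using hx)).fun_pow 3).congr_deriv ?_
    simp only [zero_smul, add_zero]
    push_cast
    field_simp
  rw [iteratedDeriv_succ, iteratedDeriv_one, hfirst.deriv_eq,
    (hinner.fun_div hcube (by simpa using hx)).fun_neg.deriv]
  simp only [zero_smul, add_zero]
  field_simp
  ring

end InnerProductSpace

section PoissonKinetic

variable {N : ℕ} (m : Fin N → ℝ)

lemma gradPos_kinetic (k : Fin N) (w : Phase N) : gradPos (kinetic m) k w = 0 :=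
  gradient_fun_const (𝕜 := ℝ) (w.1 k) (kinetic m w)

lemma gradMom_kinetic (k : Fin N) (w : Phase N) :
    gradMom (kinetic m) k w = (m k)⁻¹ • w.2 k := by
  have hsplit : (fun y => kinetic m (w.1, Function.update w.2 k y)) =
      fun y => ‖y‖ ^ 2 / (2 * m k) + ∑ i ∈ Finset.univ \ {k}, ‖w.2 i‖ ^ 2 / (2 * m i) := by
    funext y
    simp only [kinetic, Function.apply_update (fun i (p : E3) => ‖p‖ ^ 2 / (2 * m i)),
      Finset.sum_update_of_mem (Finset.mem_univ k)]
  have hderiv := ((hasStrictFDerivAt_norm_sq (w.2 k)).hasFDerivAt.mul_const (2 * m k)⁻¹).add_const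
    (∑ i ∈ Finset.univ \ {k}, ‖w.2 i‖ ^ 2 / (2 * m i))
  rw [gradMom, hsplit]
  refine HasGradientAt.gradient (hasGradientAt_iff_hasFDerivAt.2 (hderiv.congr_fderiv ?_))
  ext u
  simp only [smul_apply, coe_innerSL_apply, nsmul_eq_mul, Nat.cast_ofNat, smul_eq_mul, map_smul,
    InnerProductSpace.toDual_apply_apply, mul_inv_rev]
  ring

lemma inner_gradPos {A : Phase N → ℝ} {w : Phase N} (hA : DifferentiableAt ℝ A w) (k : Fin N)
    (u : E3) : ⟪gradPos A k w, u⟫ = fderiv ℝ A w (Pi.single k u, 0) := by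
  have hslice := (hasFDerivAt_update (𝕜 := ℝ) w.1 (i := k) (w.1 k)).prodMk
    (hasFDerivAt_const w.2 (w.1 k))
  have hA' : HasFDerivAt A (fderiv ℝ A w) (Function.update w.1 k (w.1 k), w.2) := by
    simpa only [Function.update_eq_self] using hA.hasFDerivAt
  have hcomp : HasFDerivAt (fun y => A (Function.update w.1 k y, w.2)) _ (w.1 k) :=
    hA'.comp (w.1 k) hslice
  have hsingle : ContinuousLinearMap.pi (Pi.single k (.id ℝ E3)) u =
      (Pi.single k u : Fin N → E3) := by
    ext1 l
    obtain rfl | hl := eq_or_ne l k <;> simp [*]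
  simp [gradPos, inner_gradient_left, hcomp.fderiv, hsingle]

/-- The Hamiltonian vector field of the kinetic energy, i.e. the phase-space velocity of free
motion. It is constant along its own integral curves, so its flow for time `t` is
`w ↦ w + t • driftVelocity m w` and needs no separate definition. -/
def driftVelocity (w : Phase N) : Phase N :=
  (fun k => (m k)⁻¹ • w.2 k, 0)

lemma contDiff_driftVelocity {n : WithTop ℕ∞} : ContDiff ℝ n (driftVelocity m) := by
  unfold driftVelocity
  fun_prop

lemma driftVelocity_add_smul (w : Phase N) (t : ℝ) :
    driftVelocity m (w + t • driftVelocity m w) = driftVelocity m w := by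
  simp [driftVelocity]

variable {A : Phase N → ℝ} {w : Phase N}

lemma poisson_kinetic (hA : DifferentiableAt ℝ A w) :
    poisson A (kinetic m) w = fderiv ℝ A w (driftVelocity m w) := by
  have hsum : ∑ k, ((Pi.single k ((m k)⁻¹ • w.2 k), 0) : Phase N) = driftVelocity m w :=
    Prod.ext (Prod.fst_sum.trans (Finset.univ_sum_single _)) (by simp [Prod.snd_sum, driftVelocity])
  simp only [poisson, gradMom_kinetic, gradPos_kinetic, inner_zero_right, sub_zero,
    inner_gradPos hA, ← map_sum, hsum]

lemma contDiffAt_poisson_kinetic {n : WithTop ℕ∞} (hA : ContDiffAt ℝ (n + 1) A w) :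
    ContDiffAt ℝ n (poisson A (kinetic m)) w := by
  have hfderiv : poisson A (kinetic m) =ᶠ[nhds w] fun z => fderiv ℝ A z (driftVelocity m z) := by
    filter_upwards [(hA.of_le le_add_self : ContDiffAt ℝ 1 A w).eventually (by simp)] with z hz
    exact poisson_kinetic m (hz.differentiableAt one_ne_zero)
  exact (hA.fderiv_right_succ.clm_apply
    (contDiff_driftVelocity m).contDiffAt).congr_of_eventuallyEq hfderiv

lemma poisson_kinetic_eq_deriv_line {t : ℝ}
    (hA : DifferentiableAt ℝ A (w + t • driftVelocity m w)) :
    poisson A (kinetic m) (w + t • driftVelocity m w) =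
      deriv (fun s : ℝ => A (w + s • driftVelocity m w)) t := by
  rw [poisson_kinetic m hA, driftVelocity_add_smul]
  exact (hA.hasFDerivAt.comp_hasDerivAt t (hasDerivAt_add_smul _ _ t)).deriv.symm

theorem iterate_poisson_kinetic {n : ℕ} (hA : ContDiffAt ℝ n A w) :
    (fun B => poisson B (kinetic m))^[n] A w =
      iteratedDeriv n (fun t : ℝ => A (w + t • driftVelocity m w)) 0 := by
  induction n generalizing A with
  | zero => simp
  | succ n ih =>
    have hline : Filter.Tendsto (fun t : ℝ => w + t • driftVelocity m w) (nhds 0) (nhds w) :=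
      Continuous.tendsto' (by fun_prop) _ _ (by simp)
    have hderiv : (fun t : ℝ => poisson A (kinetic m) (w + t • driftVelocity m w)) =ᶠ[nhds 0]
        deriv fun t => A (w + t • driftVelocity m w) := by
      filter_upwards [hline.eventually (hA.eventually (by simp))] with t ht
      exact poisson_kinetic_eq_deriv_line m (ht.differentiableAt (by simp))
    rw [Function.iterate_succ_apply, ih (contDiffAt_poisson_kinetic m (mod_cast hA)),
      hderiv.iteratedDeriv_eq, iteratedDeriv_succ']

end PoissonKinetic

section PairPotential

variable {N : ℕ} (G : ℝ) (m : Fin N → ℝ) (i j : Fin N) (w : Phase N)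

lemma contDiffAt_pairPot {n : WithTop ℕ∞} {w : Phase N} (hr : w.1 i - w.1 j ≠ 0) :
    ContDiffAt ℝ n (pairPot G m i j) w := by
  have hsep : ContDiffAt ℝ n (fun z : Phase N => z.1 i - z.1 j) w := by fun_prop
  exact contDiffAt_const.div (hsep.norm ℝ hr) (norm_ne_zero_iff.2 hr)

lemma pairPot_line (t : ℝ) :
    pairPot G m i j (w + t • driftVelocity m w) = -(G * m i * m j) *
      ‖(w.1 i - w.1 j) + t • ((m i)⁻¹ • w.2 i - (m j)⁻¹ • w.2 j)‖⁻¹ := by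
  have hsep : (w + t • driftVelocity m w).1 i - (w + t • driftVelocity m w).1 j =
      (w.1 i - w.1 j) + t • ((m i)⁻¹ • w.2 i - (m j)⁻¹ • w.2 j) := by
    simp only [driftVelocity, Prod.fst_add, Prod.smul_fst, Pi.add_apply, Pi.smul_apply, smul_sub]
    abel
  rw [pairPot, hsep, div_eq_mul_inv]

end PairPotential

/-- Leading drift-error term of the leapfrog (paper eq. 18):
`{{V_ij, T}, T} = (G m_i m_j / r_ij⁵) (v_ij² r_ij² − 3 (v_ij·x_ij)²)`. -/
theorem drift_error_term {N : ℕ} (G : ℝ) (hG : 0 < G) (m : Fin N → ℝ)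
    (hm : ∀ i, 0 < m i) (i j : Fin N) (hij : i ≠ j) (w : Phase N)
    (hr : ‖w.1 i - w.1 j‖ ≠ 0) :
    poisson (poisson (pairPot G m i j) (kinetic m)) (kinetic m) w =
      G * m i * m j / ‖w.1 i - w.1 j‖ ^ 5 *
        (‖(m i)⁻¹ • w.2 i - (m j)⁻¹ • w.2 j‖ ^ 2 * ‖w.1 i - w.1 j‖ ^ 2 -
          3 * ⟪(m i)⁻¹ • w.2 i - (m j)⁻¹ • w.2 j, w.1 i - w.1 j⟫ ^ 2) := by
  have hr' : w.1 i - w.1 j ≠ 0 := norm_ne_zero_iff.1 hr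
  calc poisson (poisson (pairPot G m i j) (kinetic m)) (kinetic m) w
    _ = iteratedDeriv 2 (fun t : ℝ => pairPot G m i j (w + t • driftVelocity m w)) 0 :=
      iterate_poisson_kinetic m (n := 2) (contDiffAt_pairPot G m i j hr')
    _ = -(G * m i * m j) * iteratedDeriv 2 (fun t : ℝ =>
          ‖(w.1 i - w.1 j) + t • ((m i)⁻¹ • w.2 i - (m j)⁻¹ • w.2 j)‖⁻¹) 0 := by
      simp only [pairPot_line, iteratedDeriv_const_mul_field]
    _ = _ := by
      rw [iteratedDeriv_two_inv_norm_line hr']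
      ring
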